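/- arXiv:1509.06898 — 2 statements merged into one kernel-verified Lean document; each statement's English description precedes it below -/
import Mathlib

section
/- Let α be an assembly over a tile set in which every glue has strength at most g, suppose the domain of α is a translate of the w × h rectangle with 1 ≤ h ≤ w, and let τ be a nondecreasing temperature function. If α is τ-stable, then τ(n) ≤ (h + 1)·g for every integer n with 1 ≤ n ≤ wh/2. -/
/-!
Cut the shape in column order: the part below consists of the first `n` cells, column by column and
upwards within each column. It is the smaller part, so `τ n` is at most the strength of the cut, and
at most `h` horizontal adjacencies (one per row) and one vertical adjacency cross it. To count them,
rank the cell `p` by `h * p.1 + p.2`, which is injective on a strip of height `h` and grows by `h`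
along a horizontal step and by `1` along a vertical one: a step that raises the rank by `d` and
crosses a given threshold starts at one of only `d` ranks.
-/

/-- A tile type over glue alphabet `G`: four glues on the north, east, south,
and west edges. -/
structure Tile (G : Type) where
  north : G
  east : G
  south : G
  west : G

/-- Grid adjacency: two points of `ℤ²` at Euclidean distance 1. -/
def Adj (p q : ℤ × ℤ) : Prop :=
  (p.1 - q.1).natAbs + (p.2 - q.2).natAbs = 1

/-- A set of grid points is connected under grid adjacency. -/
def ConnectedIn (S : Set (ℤ × ℤ)) : Prop :=
  ∀ p ∈ S, ∀ q ∈ S,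
    Relation.ReflTransGen (fun a b => Adj a b ∧ a ∈ S ∧ b ∈ S) p q

/-- An assembly over the tile set `T`: a finite partial function from `ℤ²` to
tiles of `T` whose domain is connected under grid adjacency. -/
structure Assembly (G : Type) (T : Set (Tile G)) where
  tiles : ℤ × ℤ → Option (Tile G)
  dom : Finset (ℤ × ℤ)
  mem_dom : ∀ p, p ∈ dom ↔ (tiles p).isSome
  connected : ConnectedIn (↑dom : Set (ℤ × ℤ))
  tiles_mem : ∀ p t, tiles p = some t → t ∈ T

/-- Strength of the bond between two abutting glues: the glues bond iff they
are equal, in which case the bond strength is the glue strength. -/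
noncomputable def glueBond {G : Type} (str : G → ℕ) (a b : G) : ℕ := by
  classical
  exact if a = b then str a else 0

/-- The strength of the bond between a tile `t` at position `p` and a tile `u`
at position `q` (0 unless `p` and `q` are adjacent and the abutting glues
match). -/
noncomputable def tileBond {G : Type} (str : G → ℕ) (t u : Tile G) (p q : ℤ × ℤ) : ℕ :=
  if q = (p.1 + 1, p.2) then glueBond str t.east u.west
  else if q = (p.1 - 1, p.2) then glueBond str t.west u.east
  else if q = (p.1, p.2 + 1) then glueBond str t.north u.south
  else if q = (p.1, p.2 - 1) then glueBond str t.south u.north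
  else 0

/-- The strength of the bond between the tiles of `α` at positions `p`, `q`. -/
noncomputable def posBond {G : Type} {T : Set (Tile G)} (str : G → ℕ)
    (α : Assembly G T) (p q : ℤ × ℤ) : ℕ :=
  match α.tiles p, α.tiles q with
  | some t, some u => tileBond str t u p q
  | _, _ => 0

/-- The strength of the cut of `α` into the parts `A` and `B`: the total
strength of bonds between tiles in opposite parts. -/
noncomputable def cutStrength {G : Type} {T : Set (Tile G)} (str : G → ℕ)
    (α : Assembly G T) (A B : Finset (ℤ × ℤ)) : ℕ :=
  ∑ p ∈ A, ∑ q ∈ B, posBond str α p q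

/-- An assembly is `τ`-stable if every cut of it into two nonempty parts of
sizes `a` and `b` has strength at least `τ (min a b)`. -/
def IsStable {G : Type} {T : Set (Tile G)} (str : G → ℕ) (τ : ℕ → ℕ)
    (α : Assembly G T) : Prop :=
  ∀ A B : Finset (ℤ × ℤ), Disjoint A B → A ∪ B = α.dom →
    A.Nonempty → B.Nonempty →
    τ (min A.card B.card) ≤ cutStrength str α A B

/-- Two assemblies represent the same supertile iff one is a translate of the
other. -/
def SameSupertile {G : Type} {T : Set (Tile G)} (α β : Assembly G T) : Prop :=
  ∃ v : ℤ × ℤ, ∀ p : ℤ × ℤ, β.tiles (p + v) = α.tiles p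

/-- `γ` is the union of the disjoint assemblies `α` and `β`. -/
def IsUnionOf {G : Type} {T : Set (Tile G)} (γ α β : Assembly G T) : Prop :=
  Disjoint α.dom β.dom ∧ γ.dom = α.dom ∪ β.dom ∧
    (∀ p ∈ α.dom, γ.tiles p = α.tiles p) ∧
    (∀ p ∈ β.dom, γ.tiles p = β.tiles p)

/-- The supertiles of `α` and `β` combine into the supertile of `γ`: there are
disjoint representatives whose union is a representative of `γ` such that the
cut between them has strength at least `τ` of the size of the smaller part. -/
def CombinesTo {G : Type} {T : Set (Tile G)} (str : G → ℕ) (τ : ℕ → ℕ)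
    (α β γ : Assembly G T) : Prop :=
  ∃ α' β' γ' : Assembly G T, SameSupertile α α' ∧ SameSupertile β β' ∧
    SameSupertile γ γ' ∧ IsUnionOf γ' α' β' ∧
    τ (min α'.dom.card β'.dom.card) ≤ cutStrength str γ' α'.dom β'.dom

/-- The supertile of `γ` breaks into the supertiles of `α` and `β`: there are
disjoint representatives (each with connected domain, as all assemblies have)
whose union is a representative of `γ` such that the cut between them has
strength strictly less than `τ` of the size of the smaller part. -/
def BreaksTo {G : Type} {T : Set (Tile G)} (str : G → ℕ) (τ : ℕ → ℕ)
    (γ α β : Assembly G T) : Prop :=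
  ∃ α' β' γ' : Assembly G T, SameSupertile α α' ∧ SameSupertile β β' ∧
    SameSupertile γ γ' ∧ IsUnionOf γ' α' β' ∧
    cutStrength str γ' α'.dom β'.dom < τ (min α'.dom.card β'.dom.card)

/-- The producible supertiles of the size-dependent system `(T, τ)`:
supertiles of size 1, combinations of two producible supertiles, and
supertiles resulting from a break of a producible supertile. -/
inductive Producible {G : Type} (str : G → ℕ) (T : Set (Tile G)) (τ : ℕ → ℕ) :
    Assembly G T → Prop
  | single (α : Assembly G T) : α.dom.card = 1 → Producible str T τ α
  | combine (α β γ : Assembly G T) : Producible str T τ α →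
      Producible str T τ β → CombinesTo str τ α β γ → Producible str T τ γ
  | breakLeft (γ α β : Assembly G T) : Producible str T τ γ →
      BreaksTo str τ γ α β → Producible str T τ α
  | breakRight (γ α β : Assembly G T) : Producible str T τ γ →
      BreaksTo str τ γ α β → Producible str T τ β

/-- A producible supertile is terminal if it admits no combination with any
producible supertile and no break. -/
def Terminal {G : Type} (str : G → ℕ) (T : Set (Tile G)) (τ : ℕ → ℕ)
    (α : Assembly G T) : Prop :=
  Producible str T τ α ∧
    (∀ β γ : Assembly G T, Producible str T τ β →
      ¬ CombinesTo str τ α β γ ∧ ¬ CombinesTo str τ β α γ) ∧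
    (∀ β γ : Assembly G T, ¬ BreaksTo str τ α β γ)

/-- The system `(T, τ)` self-assembles the shape `P` if every terminal
supertile consists of assemblies whose domain is a translate of `P`. -/
def SelfAssembles {G : Type} (str : G → ℕ) (T : Set (Tile G)) (τ : ℕ → ℕ)
    (P : Set (ℤ × ℤ)) : Prop :=
  ∀ α : Assembly G T, Terminal str T τ α →
    ∃ v : ℤ × ℤ, (↑α.dom : Set (ℤ × ℤ)) = (· + v) '' P

/-- The `w × h` rectangle `{1,…,w} × {1,…,h}`. -/
def rect (w h : ℕ) : Set (ℤ × ℤ) :=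
  {p | 1 ≤ p.1 ∧ p.1 ≤ (w : ℤ) ∧ 1 ≤ p.2 ∧ p.2 ≤ (h : ℤ)}

section

open Finset

theorem exists_mem_card_filter_lt_eq {ι β : Type*} [LinearOrder β] {s : Finset ι} {f : ι → β}
    (hf : Set.InjOn f s) {n : ℕ} (hn : n < #s) : ∃ c ∈ s, #{i ∈ s | f i < f c} = n := by
  let rank (c : ι) : ℕ := #{i ∈ s | f i < f c}
  have rank_lt {c d : ι} (hc : c ∈ s) (hcd : f c < f d) : rank c < rank d :=
    card_lt_card <| (ssubset_iff_of_subset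
      (monotone_filter_right s fun i _ hi => hi.trans hcd)).2 ⟨c, by simp [hc, hcd]⟩
  have rank_mapsTo : Set.MapsTo rank s (range #s) := fun c hc =>
    mem_coe.2 <| mem_range.2 <| card_lt_card <| filter_ssubset.2 ⟨c, hc, lt_irrefl _⟩
  have rank_injOn : Set.InjOn rank s := fun c hc d hd hcd =>
    hf hc hd <| le_antisymm (not_lt.1 fun hlt => (rank_lt hd hlt).ne' hcd)
      (not_lt.1 fun hlt => (rank_lt hc hlt).ne hcd)
  exact surjOn_of_injOn_of_card_le rank rank_mapsTo rank_injOn (card_range _).le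
    (mem_coe.2 (mem_range.2 hn))

theorem card_filter_lt_and_le_add_le {ι : Type*} {s : Finset ι} {f : ι → ℤ} (hf : Set.InjOn f s)
    (t : ℤ) (d : ℕ) : #{i ∈ s | f i < t ∧ t ≤ f i + d} ≤ d := by
  have hmaps : Set.MapsTo f ({i ∈ s | f i < t ∧ t ≤ f i + d} : Finset ι) (Ico (t - d) t) := by
    intro i hi
    simp only [coe_filter, Set.mem_ofPred_eq] at hi
    simp only [coe_Ico, Set.mem_Ico]
    lia
  calc #{i ∈ s | f i < t ∧ t ≤ f i + d}
      ≤ #(Ico (t - d) t) := card_le_card_of_injOn f hmaps (hf.mono (filter_subset _ _))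
    _ = d := by simp

theorem adj_iff {p q : ℤ × ℤ} :
    Adj p q ↔ q = p + (1, 0) ∨ q = p - (1, 0) ∨ q = p + (0, 1) ∨ q = p - (0, 1) := by
  simp only [Adj, Prod.ext_iff, Prod.fst_add, Prod.snd_add, Prod.fst_sub, Prod.snd_sub]
  lia

instance : DecidableRel Adj := fun _ _ => inferInstanceAs (Decidable (_ = _))

section Bonds

variable {G : Type} {T : Set (Tile G)} {str : G → ℕ} {g : ℕ}

theorem glueBond_le (hg : ∀ a, str a ≤ g) (a b : G) : glueBond str a b ≤ g := by
  unfold glueBond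
  split_ifs
  exacts [hg a, Nat.zero_le g]

theorem tileBond_le (hg : ∀ a, str a ≤ g) (t u : Tile G) (p q : ℤ × ℤ) :
    tileBond str t u p q ≤ g := by
  unfold tileBond
  split_ifs
  exacts [glueBond_le hg _ _, glueBond_le hg _ _, glueBond_le hg _ _, glueBond_le hg _ _,
    Nat.zero_le g]

theorem tileBond_eq_zero_of_not_adj (t u : Tile G) {p q : ℤ × ℤ} (hpq : ¬ Adj p q) :
    tileBond str t u p q = 0 := by
  rw [adj_iff] at hpq
  simp only [Prod.ext_iff, Prod.fst_add, Prod.snd_add, Prod.fst_sub, Prod.snd_sub] at hpq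
  simp only [tileBond, Prod.ext_iff]
  grind

theorem posBond_le_ite_adj (hg : ∀ a, str a ≤ g) (α : Assembly G T) (p q : ℤ × ℤ) :
    posBond str α p q ≤ if Adj p q then g else 0 := by
  unfold posBond
  split
  · split_ifs with hpq
    exacts [tileBond_le hg _ _ _ _, (tileBond_eq_zero_of_not_adj _ _ hpq).le]
  · exact Nat.zero_le _

theorem cutStrength_le_card_interedges_mul (hg : ∀ a, str a ≤ g) (α : Assembly G T)
    (A B : Finset (ℤ × ℤ)) : cutStrength str α A B ≤ #(Rel.interedges Adj A B) * g :=
  calc ∑ p ∈ A, ∑ q ∈ B, posBond str α p q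
      ≤ ∑ p ∈ A, ∑ q ∈ B, if Adj p q then g else 0 :=
        sum_le_sum fun p _ => sum_le_sum fun q _ => posBond_le_ite_adj hg α p q
    _ = #(Rel.interedges Adj A B) * g := by
        rw [← sum_product' A B fun p q => if Adj p q then g else 0, ← sum_filter, sum_const,
          smul_eq_mul, Rel.interedges]

end Bonds

/-- The rank of a cell in the column-by-column order of a horizontal strip of height `h`, up to an
additive constant that depends on the position of the strip. -/
def columnRank (h : ℕ) (p : ℤ × ℤ) : ℤ := h * p.1 + p.2

theorem injOn_columnRank (h : ℕ) (b : ℤ) :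
    Set.InjOn (columnRank h) {p | p.2 ∈ Set.Ioc b (b + h)} := by
  rintro ⟨x, y⟩ ⟨hy, hy'⟩ ⟨x', y'⟩ ⟨hz, hz'⟩ (heq : h * x + y = h * x' + y')
  dsimp only at hy hy' hz hz'
  have hdvd : (h : ℤ) ∣ y - y' := ⟨x' - x, by linear_combination heq⟩
  have hyy : y = y' :=
    sub_eq_zero.1 (Int.eq_zero_of_abs_lt_dvd hdvd (abs_sub_lt_iff.2 ⟨by lia, by lia⟩))
  have hxx : x = x' := mul_left_cancel₀ (show (h : ℤ) ≠ 0 by lia) (by linear_combination heq - hyy)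
  rw [hxx, hyy]

theorem Adj.eq_add_of_columnRank_lt {h : ℕ} {p q : ℤ × ℤ} (hadj : Adj p q)
    (hlt : columnRank h p < columnRank h q) : q = p + (1, 0) ∨ q = p + (0, 1) := by
  rcases adj_iff.1 hadj with rfl | rfl | rfl | rfl
  · exact .inl rfl
  · simp only [columnRank, Prod.fst_sub, Prod.snd_sub] at hlt
    lia
  · exact .inr rfl
  · simp only [columnRank, Prod.fst_sub, Prod.snd_sub] at hlt
    lia

theorem card_interedges_columnRank_le {h : ℕ} {s : Finset (ℤ × ℤ)}
    (hs : Set.InjOn (columnRank h) s) (t : ℤ) :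
    #(Rel.interedges Adj {p ∈ s | columnRank h p < t} {p ∈ s | ¬ columnRank h p < t}) ≤ h + 1 := by
  let crossing (d : ℕ) : Finset (ℤ × ℤ) :=
    {p ∈ s | columnRank h p < t ∧ t ≤ columnRank h p + d}
  have hsub : Rel.interedges Adj {p ∈ s | columnRank h p < t} {p ∈ s | ¬ columnRank h p < t} ⊆
      (crossing h).image (fun p => (p, p + (1, 0))) ∪
        (crossing 1).image (fun p => (p, p + (0, 1))) := by
    rintro ⟨p, q⟩ hpq
    obtain ⟨hp, hq, hadj⟩ := Rel.mk_mem_interedges_iff.1 hpq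
    rw [mem_filter] at hp hq
    have hle : t ≤ columnRank h q := not_lt.1 hq.2
    rcases hadj.eq_add_of_columnRank_lt (hp.2.trans_le hle) with rfl | rfl
    · have hrank : columnRank h (p + (1, 0)) = columnRank h p + h := by
        simp only [columnRank, Prod.fst_add, Prod.snd_add]
        ring
      exact mem_union_left _ <| mem_image_of_mem _ <| mem_filter.2 ⟨hp.1, hp.2, hrank ▸ hle⟩
    · have hrank : columnRank h (p + (0, 1)) = columnRank h p + (1 : ℕ) := by
        simp only [columnRank, Prod.fst_add, Prod.snd_add]
        ring
      exact mem_union_right _ <| mem_image_of_mem _ <| mem_filter.2 ⟨hp.1, hp.2, hrank ▸ hle⟩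
  calc #(Rel.interedges Adj {p ∈ s | columnRank h p < t} {p ∈ s | ¬ columnRank h p < t})
      ≤ #(crossing h) + #(crossing 1) :=
        (card_le_card hsub).trans <| (card_union_le _ _).trans <|
          add_le_add card_image_le card_image_le
    _ ≤ h + 1 :=
        add_le_add (card_filter_lt_and_le_add_le hs t h) (card_filter_lt_and_le_add_le hs t 1)

theorem stable_rectangle_temperature_bound_general {G : Type} {T : Set (Tile G)} {str : G → ℕ}
    {g : ℕ} (hg : ∀ a, str a ≤ g) {α : Assembly G T} {h : ℕ} {b : ℤ}
    (hdom : ∀ p ∈ α.dom, p.2 ∈ Set.Ioc b (b + h)) {τ : ℕ → ℕ} (hstable : IsStable str τ α) :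
    ∀ n : ℕ, 1 ≤ n → 2 * n ≤ #α.dom → τ n ≤ (h + 1) * g := by
  intro n hn hcard
  have hinj : Set.InjOn (columnRank h) α.dom := (injOn_columnRank h b).mono hdom
  obtain ⟨c, hc, hrank⟩ := exists_mem_card_filter_lt_eq hinj (show n < #α.dom by lia)
  let A : Finset (ℤ × ℤ) := {p ∈ α.dom | columnRank h p < columnRank h c}
  let B : Finset (ℤ × ℤ) := {p ∈ α.dom | ¬ columnRank h p < columnRank h c}
  have hA : #A = n := hrank
  have hAB : #A + #B = #α.dom := card_filter_add_card_filter_not _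
  calc τ n = τ (min #A #B) := by rw [min_eq_left (by lia), hA]
    _ ≤ cutStrength str α A B :=
        hstable A B (disjoint_filter_filter_not _ _ _) (filter_union_filter_not_eq _ _)
          (card_pos.1 (by lia)) ⟨c, mem_filter.2 ⟨hc, lt_irrefl _⟩⟩
    _ ≤ #(Rel.interedges Adj A B) * g := cutStrength_le_card_interedges_mul hg α A B
    _ ≤ (h + 1) * g := Nat.mul_le_mul_right g (card_interedges_columnRank_le hinj _)

theorem ncard_rect (w h : ℕ) : (rect w h).ncard = w * h := by
  have hrect : rect w h = (Icc (1 : ℤ) w ×ˢ Icc (1 : ℤ) h : Finset (ℤ × ℤ)) := by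
    ext p
    simp only [rect, Set.mem_ofPred_eq, mem_coe, mem_product, mem_Icc, and_assoc]
  rw [hrect, Set.ncard_coe_finset, card_product, Int.card_Icc, Int.card_Icc,
    add_sub_cancel_right, add_sub_cancel_right, Int.toNat_natCast, Int.toNat_natCast]

theorem card_eq_of_coe_eq_translate_rect {s : Finset (ℤ × ℤ)} {v : ℤ × ℤ} {w h : ℕ}
    (hs : (s : Set (ℤ × ℤ)) = (· + v) '' rect w h) : #s = w * h := by
  rw [← Set.ncard_coe_finset, hs, Set.ncard_image_of_injective _ (add_left_injective v),
    ncard_rect]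

theorem snd_mem_Ioc_of_mem_translate_rect {p v : ℤ × ℤ} {w h : ℕ}
    (hp : p ∈ (· + v) '' rect w h) : p.2 ∈ Set.Ioc v.2 (v.2 + h) := by
  obtain ⟨q, ⟨-, -, hq, hq'⟩, rfl⟩ := hp
  simp only [Prod.snd_add, Set.mem_Ioc]
  lia

end

/-- If `α` is an assembly over a tile set in which every glue has
strength at most `g`, the domain of `α` is a translate of the `w × h` rectangle
with `1 ≤ h ≤ w`, `τ` is a nondecreasing temperature function, and `α` is
`τ`-stable, then `τ(n) ≤ (h + 1)·g` for every integer `n` with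
`1 ≤ n ≤ wh/2`. -/
theorem stable_rectangle_temperature_bound {G : Type} {T : Set (Tile G)}
    (str : G → ℕ) (g : ℕ) (hg : ∀ a : G, str a ≤ g)
    (α : Assembly G T) (w h : ℕ) (hh : 1 ≤ h) (hw : h ≤ w)
    (hdom : ∃ v : ℤ × ℤ, (↑α.dom : Set (ℤ × ℤ)) = (· + v) '' rect w h)
    (τ : ℕ → ℕ) (hτ : Monotone τ) (hstable : IsStable str τ α) :
    ∀ n : ℕ, 1 ≤ n → 2 * n ≤ w * h → τ n ≤ (h + 1) * g := by
  obtain ⟨v, hv⟩ := hdom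
  exact card_eq_of_coe_eq_translate_rect hv ▸ stable_rectangle_temperature_bound_general hg
    (fun _ hp => snd_mem_Ioc_of_mem_translate_rect (hv.subset hp)) hstable
end

section
/- There exist a glue alphabet Σ with a strength function, a finite tile set T over Σ, and a nondecreasing temperature function τ : ℕ → ℕ such that the size-dependent system (T, τ) has a producible supertile that is not τ-stable. -/
section Bonds

variable {G : Type} {T : Set (Tile G)} (str : G → ℕ)

theorem glueBond_self (g : G) : glueBond str g g = str g := by
  simp [glueBond]

theorem tileBond_of_not_adj (t u : Tile G) {p q : ℤ × ℤ} (h : ¬ Adj p q) :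
    tileBond str t u p q = 0 := by
  unfold tileBond
  split_ifs with hE hW hN hS
  · exact absurd (by simp [hE, Adj]) h
  · exact absurd (by simp [hW, Adj]) h
  · exact absurd (by simp [hN, Adj]) h
  · exact absurd (by simp [hS, Adj]) h
  · rfl

theorem tileBond_east (t u : Tile G) (x y : ℤ) :
    tileBond str t u (x, y) (x + 1, y) = glueBond str t.east u.west := by
  simp [tileBond]

theorem posBond_of_not_adj (α : Assembly G T) {p q : ℤ × ℤ} (h : ¬ Adj p q) :
    posBond str α p q = 0 := by
  unfold posBond
  split
  · exact tileBond_of_not_adj str _ _ h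
  · rfl

theorem posBond_of_tiles_eq_some {α : Assembly G T} {p q : ℤ × ℤ} {t u : Tile G}
    (hp : α.tiles p = some t) (hq : α.tiles q = some u) :
    posBond str α p q = tileBond str t u p q := by
  simp only [posBond, hp, hq]

theorem cutStrength_eq_posBond (α : Assembly G T) {A B : Finset (ℤ × ℤ)} {p q : ℤ × ℤ}
    (hp : p ∈ A) (hq : q ∈ B) (h : ∀ p' ∈ A, ∀ q' ∈ B, Adj p' q' → p' = p ∧ q' = q) :
    cutStrength str α A B = posBond str α p q := by
  rw [cutStrength, ← Finset.sum_product', Finset.sum_eq_single_of_mem (p, q)]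
  · exact Finset.mk_mem_product hp hq
  · rintro ⟨p', q'⟩ hmem hne
    obtain ⟨hp', hq'⟩ := Finset.mem_product.mp hmem
    exact posBond_of_not_adj str α fun hadj ↦ hne (Prod.ext_iff.mpr (h p' hp' q' hq' hadj))

end Bonds

section Combination

variable {G : Type} {T : Set (Tile G)}

theorem SameSupertile.refl (α : Assembly G T) : SameSupertile α α :=
  ⟨0, fun p ↦ by rw [add_zero]⟩

theorem IsUnionOf.combinesTo {str : G → ℕ} {τ : ℕ → ℕ} {α β γ : Assembly G T}
    (h : IsUnionOf γ α β) (hτ : τ (min α.dom.card β.dom.card) ≤ cutStrength str γ α.dom β.dom) :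
    CombinesTo str τ α β γ :=
  ⟨α, β, γ, .refl α, .refl β, .refl γ, h, hτ⟩

/-- The assembly with domain `S` all of whose tiles are of type `t`. -/
noncomputable def Assembly.const {t : Tile G} (ht : t ∈ T) (S : Finset (ℤ × ℤ))
    (hS : ConnectedIn (S : Set (ℤ × ℤ))) : Assembly G T where
  tiles p := if p ∈ S then some t else none
  dom := S
  mem_dom p := by simp
  connected := hS
  tiles_mem p u hu := by
    obtain ⟨-, hut⟩ := Option.ite_none_right_eq_some.mp hu
    rwa [← Option.some.inj hut]

theorem Assembly.isUnionOf_const {t : Tile G} (ht : t ∈ T) {A B S : Finset (ℤ × ℤ)}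
    (hA : ConnectedIn (A : Set (ℤ × ℤ))) (hB : ConnectedIn (B : Set (ℤ × ℤ)))
    (hS : ConnectedIn (S : Set (ℤ × ℤ))) (hdisj : Disjoint A B) (hunion : A ∪ B = S) :
    IsUnionOf (const ht S hS) (const ht A hA) (const ht B hB) := by
  subst hunion
  refine ⟨hdisj, rfl, fun p hp ↦ ?_, fun p hp ↦ ?_⟩
  · exact (if_pos (Finset.mem_union_left B hp)).trans (if_pos hp).symm
  · exact (if_pos (Finset.mem_union_right A hp)).trans (if_pos hp).symm

end Combination

section Rows

/-- The positions `(a, 0), …, (b - 1, 0)` of a horizontal row; empty if `b ≤ a`. -/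
noncomputable def rowDom (a b : ℤ) : Finset (ℤ × ℤ) :=
  Finset.Ico a b ×ˢ {0}

theorem mk_mem_rowDom {a b x y : ℤ} : (x, y) ∈ rowDom a b ↔ (a ≤ x ∧ x < b) ∧ y = 0 := by
  rw [rowDom, Finset.mem_product, Finset.mem_Ico, Finset.mem_singleton]

theorem card_rowDom (a b : ℤ) : (rowDom a b).card = (b - a).toNat := by
  simp [rowDom]

theorem rowDom_nonempty {a b : ℤ} (h : a < b) : (rowDom a b).Nonempty :=
  (Finset.nonempty_Ico.mpr h).product (Finset.singleton_nonempty 0)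

theorem disjoint_rowDom_consecutive (a m b : ℤ) : Disjoint (rowDom a m) (rowDom m b) :=
  Finset.disjoint_product.mpr (.inl (Finset.Ico_disjoint_Ico_consecutive a m b))

theorem rowDom_union_rowDom {a m b : ℤ} (ham : a ≤ m) (hmb : m ≤ b) :
    rowDom a m ∪ rowDom m b = rowDom a b := by
  rw [rowDom, rowDom, ← Finset.union_product, Finset.Ico_union_Ico_eq_Ico ham hmb, rowDom]

theorem connectedIn_rowDom (a b : ℤ) : ConnectedIn (rowDom a b : Set (ℤ × ℤ)) := by
  rintro ⟨x, y⟩ hp ⟨x', y'⟩ hq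
  obtain ⟨hx, rfl⟩ := mk_mem_rowDom.mp hp
  obtain ⟨hx', rfl⟩ := mk_mem_rowDom.mp hq
  have hadj (i : ℤ) : Adj (i, 0) (i + 1, 0) ∧ Adj (i + 1, 0) (i, 0) := by simp [Adj]
  have hmem (i : ℤ) (hi : a ≤ i ∧ i < b) : (i, 0) ∈ (rowDom a b : Set (ℤ × ℤ)) :=
    mk_mem_rowDom.mpr ⟨hi, rfl⟩
  have hpath : Relation.ReflTransGen (fun i j : ℤ ↦ Adj (i, 0) (j, 0) ∧
      (i, 0) ∈ (rowDom a b : Set (ℤ × ℤ)) ∧ (j, 0) ∈ (rowDom a b : Set (ℤ × ℤ))) x x' := by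
    apply reflTransGen_of_succ
    · rintro i ⟨hxi, hix'⟩
      rw [Order.succ_eq_add_one]
      exact ⟨(hadj i).1, hmem i (by omega), hmem (i + 1) (by omega)⟩
    · rintro i ⟨hx'i, hix⟩
      rw [Order.succ_eq_add_one]
      exact ⟨(hadj i).2, hmem (i + 1) (by omega), hmem i (by omega)⟩
  exact hpath.lift (fun i ↦ (i, 0)) fun _ _ h ↦ h

variable {G : Type} {T : Set (Tile G)} {t : Tile G} (ht : t ∈ T) {str : G → ℕ} {τ : ℕ → ℕ}
  {a m b : ℤ}

/-- The horizontal row of tiles of type `t` at the positions `(a, 0), …, (b - 1, 0)`. -/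
noncomputable def row (a b : ℤ) : Assembly G T :=
  .const ht (rowDom a b) (connectedIn_rowDom a b)

theorem row_tiles_of_mem {p : ℤ × ℤ} (hp : p ∈ rowDom a b) : (row ht a b).tiles p = some t :=
  if_pos hp

theorem cutStrength_row (hEW : t.east = t.west) (ham : a < m) (hmb : m < b) :
    cutStrength str (row ht a b) (rowDom a m) (rowDom m b) = str t.west := by
  have hleft : (m - 1, 0) ∈ rowDom a b := by rw [mk_mem_rowDom]; omega
  have hright : (m - 1 + 1, 0) ∈ rowDom a b := by rw [mk_mem_rowDom]; omega
  calc cutStrength str (row ht a b) (rowDom a m) (rowDom m b)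
      = posBond str (row ht a b) (m - 1, 0) (m - 1 + 1, 0) := by
        apply cutStrength_eq_posBond
        · rw [mk_mem_rowDom]; omega
        · rw [mk_mem_rowDom]; omega
        · rintro ⟨x, y⟩ hp ⟨x', y'⟩ hq hadj
          simp only [mk_mem_rowDom, Adj, Prod.mk.injEq] at hp hq hadj ⊢
          omega
    _ = tileBond str t t (m - 1, 0) (m - 1 + 1, 0) :=
        posBond_of_tiles_eq_some str (row_tiles_of_mem ht hleft) (row_tiles_of_mem ht hright)
    _ = str t.west := by rw [tileBond_east, hEW, glueBond_self]

theorem combinesTo_row (hEW : t.east = t.west) (ham : a < m) (hmb : m < b)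
    (hτ : τ (min (m - a).toNat (b - m).toNat) ≤ str t.west) :
    CombinesTo str τ (row ht a m) (row ht m b) (row ht a b) := by
  refine (Assembly.isUnionOf_const ht _ _ _ (disjoint_rowDom_consecutive a m b)
    (rowDom_union_rowDom ham.le hmb.le)).combinesTo ?_
  change τ (min (rowDom a m).card (rowDom m b).card) ≤
    cutStrength str (row ht a b) (rowDom a m) (rowDom m b)
  rwa [cutStrength_row ht hEW ham hmb, card_rowDom, card_rowDom]

theorem producible_row (hEW : t.east = t.west) (hτ : τ 1 ≤ str t.west) (hab : a < b) :
    Producible str T τ (row ht a b) := by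
  have single (x : ℤ) : Producible str T τ (row ht x (x + 1)) :=
    .single _ ((card_rowDom x (x + 1)).trans (by omega))
  induction b, Int.add_one_le_of_lt hab using Int.leInduction with
  | base => exact single a
  | succ b hb ih =>
    have hsize : min (b - a).toNat (b + 1 - b).toNat = 1 := by omega
    exact .combine _ _ _ (ih hb) (single b)
      (combinesTo_row ht hEW hb (lt_add_one b) (hsize ▸ hτ))

theorem not_isStable_row (hEW : t.east = t.west) (ham : a < m) (hmb : m < b)
    (hτ : str t.west < τ (min (m - a).toNat (b - m).toNat)) :
    ¬ IsStable str τ (row ht a b) := by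
  intro hstable
  have hcut := hstable (rowDom a m) (rowDom m b) (disjoint_rowDom_consecutive a m b)
    (rowDom_union_rowDom ham.le hmb.le) (rowDom_nonempty ham) (rowDom_nonempty hmb)
  rw [cutStrength_row ht hEW ham hmb, card_rowDom, card_rowDom] at hcut
  exact hτ.not_ge hcut

end Rows

/-- There exist a glue alphabet with a strength function, a
finite tile set `T`, and a nondecreasing temperature function `τ` such that
the size-dependent system `(T, τ)` has a producible supertile that is not
`τ`-stable. -/
theorem producible_not_stable :
    ∃ (G : Type) (str : G → ℕ) (T : Set (Tile G)) (τ : ℕ → ℕ),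
      T.Finite ∧ Monotone τ ∧
      ∃ α : Assembly G T, Producible str T τ α ∧ ¬ IsStable str τ α := by
  let t : Tile Unit := ⟨(), (), (), ()⟩
  have ht : t ∈ ({t} : Set (Tile Unit)) := Set.mem_singleton t
  refine ⟨Unit, fun _ ↦ 1, {t}, id, Set.finite_singleton t, monotone_id, row ht 0 4, ?_, ?_⟩
  · exact producible_row ht rfl le_rfl (by norm_num)
  · exact not_isStable_row ht rfl (m := 2) (by norm_num) (by norm_num) (by decide)
end
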